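/- Let (M,d) be a metric space, T : M → M, A ⊆ M, and U ⊆ M with A ⊆ U, T(U) ⊆ U, and T Lipschitz on U with constant L₁ (d(T x, T y) ≤ L₁ d(x,y) for all x, y ∈ U). Assume: (i) T has the Lipschitz shadowing property on A, i.e. there exist d₀' > 0 and L > 0 such that for every δ with 0 ≤ δ ≤ d₀' and every sequence y : ℤ → A with d(T(y_n), y_{n+1}) ≤ δ for all n ∈ ℤ, there exists an orbit z : ℤ → A of T (T(z_n) = z_{n+1} for all n) with d(z_n, y_n) ≤ Lδ for all n ∈ ℤ; (ii) there exist C > 0 and α ∈ (0,1) such that for every δ with 0 ≤ δ < 1 and every δ-pseudo-orbit x : ℤ → U of T contained in U, there exists a sequence x̃ : ℤ → A with d(x_n, x̃_n) ≤ C δ^α for all n ∈ ℤ. Then T has the α-Hölder shadowing property on U: there exist d₀ > 0 and C₃ > 0 such that every δ-pseudo-orbit x : ℤ → U of T with 0 ≤ δ ≤ d₀ is C₃ δ^α-shadowed by an orbit of T contained in A (there exists z : ℤ → A with T(z_n) = z_{n+1} and d(x_n, z_n) ≤ C₃ δ^α for all n ∈ ℤ). -/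

import Mathlib

/-!
Replacing a `δ`-pseudo-orbit in `U` by a sequence in `A` at distance `O(δ ^ α)` again gives a
pseudo-orbit, because `T` is Lipschitz on `U`; its error is `O(δ ^ α)`, because `δ ≤ δ ^ α` for
`δ, α ≤ 1`. Tracing this sequence with exponent `β` costs another `O(δ ^ (α * β))`,
and Lipschitz shadowing is the case `β = 1`.
-/

open Filter Topology
open scoped NNReal

section PseudoOrbit

variable {M : Type*} [PseudoMetricSpace M]

/-- The `δ`-pseudo-orbits of `T`, indexed by `ℤ`. -/
def IsPseudoOrbit (T : M → M) (δ : ℝ) (x : ℤ → M) : Prop :=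
  ∀ n : ℤ, dist (T (x n)) (x (n + 1)) ≤ δ

/-- Tracing of the pseudo-orbits of `T` in `U`, with Hölder exponent `α`, by sequences from the
family `S`. If `S` consists of the orbits in `A`, this is Hölder shadowing by orbits in `A`
(Lipschitz shadowing for `α = 1`); if `S` consists of all sequences in `A`, it says only that
pseudo-orbits in `U` stay close to `A`. -/
def HolderTraced (T : M → M) (α : ℝ) (U : Set M) (S : Set (ℤ → M)) : Prop :=
  ∃ d > 0, ∃ C > 0, ∀ δ : ℝ, 0 ≤ δ → δ ≤ d → ∀ x : ℤ → M, (∀ n, x n ∈ U) →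
    IsPseudoOrbit T δ x → ∃ z ∈ S, ∀ n, dist (x n) (z n) ≤ C * δ ^ α

variable {T : M → M} {U : Set M} {K : ℝ≥0} {x y : ℤ → M} {δ : ℝ}

theorem IsPseudoOrbit.mono {δ' : ℝ} (hx : IsPseudoOrbit T δ x) (h : δ ≤ δ') :
    IsPseudoOrbit T δ' x :=
  fun n => (hx n).trans h

theorem IsPseudoOrbit.of_dist_le (hx : IsPseudoOrbit T δ x) (hT : LipschitzOnWith K T U)
    (hxU : ∀ n, x n ∈ U) (hyU : ∀ n, y n ∈ U) {η : ℝ} (hxy : ∀ n, dist (x n) (y n) ≤ η) :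
    IsPseudoOrbit T (K * η + δ + η) y := fun n =>
  calc dist (T (y n)) (y (n + 1))
      ≤ dist (T (y n)) (T (x n)) + dist (T (x n)) (x (n + 1)) + dist (x (n + 1)) (y (n + 1)) :=
        dist_triangle4 _ _ _ _
    _ ≤ K * η + δ + η := by
        gcongr
        · rw [dist_comm]
          exact (hT.dist_le_mul _ (hxU n) _ (hyU n)).trans (by gcongr; exact hxy n)
        · exact hx n
        · exact hxy (n + 1)

theorem IsPseudoOrbit.of_dist_le_mul_rpow (hx : IsPseudoOrbit T δ x)
    (hT : LipschitzOnWith K T U) (hxU : ∀ n, x n ∈ U) (hyU : ∀ n, y n ∈ U) {C α : ℝ}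
    (hδ0 : 0 ≤ δ) (hδ1 : δ ≤ 1) (hα : α ≤ 1) (hxy : ∀ n, dist (x n) (y n) ≤ C * δ ^ α) :
    IsPseudoOrbit T ((K * C + 1 + C) * δ ^ α) y := by
  refine (hx.of_dist_le hT hxU hyU hxy).mono ?_
  have hδα : δ ≤ δ ^ α := Real.self_le_rpow_of_le_one hδ0 hδ1 hα
  linarith

end PseudoOrbit

theorem exists_pos_forall_mul_rpow_le (K : ℝ) {α d : ℝ} (hα : 0 < α) (hd : 0 < d) :
    ∃ r > 0, ∀ δ : ℝ, 0 ≤ δ → δ ≤ r → K * δ ^ α ≤ d := by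
  have htendsto : Tendsto (fun δ : ℝ => K * δ ^ α) (𝓝 0) (𝓝 0) := by
    simpa [Real.zero_rpow hα.ne'] using
      ((Real.continuous_rpow_const hα.le).const_mul K).tendsto 0
  obtain ⟨r, hr, hball⟩ :=
    Metric.nhds_basis_closedBall.eventually_iff.1 (htendsto.eventually_le_const hd)
  exact ⟨r, hr, fun δ hδ0 hδr => hball (by simpa [abs_of_nonneg hδ0] using hδr)⟩

theorem add_mul_rpow_rpow_le {C L K α β δ : ℝ} (hC : 0 ≤ C) (hK : 0 ≤ K) (hα : 0 ≤ α)
    (hβ0 : 0 ≤ β) (hβ1 : β ≤ 1) (hδ0 : 0 ≤ δ) (hδ1 : δ ≤ 1) :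
    C * δ ^ α + L * (K * δ ^ α) ^ β ≤ (C + L * K ^ β) * δ ^ (α * β) := by
  have hexponent : δ ^ α ≤ δ ^ (α * β) :=
    Real.rpow_le_rpow_of_exponent_ge' hδ0 hδ1 (by positivity) (mul_le_of_le_one_right hα hβ1)
  calc C * δ ^ α + L * (K * δ ^ α) ^ β
      = C * δ ^ α + L * K ^ β * δ ^ (α * β) := by
        rw [Real.mul_rpow hK (Real.rpow_nonneg hδ0 α), ← Real.rpow_mul hδ0, mul_assoc L]
    _ ≤ C * δ ^ (α * β) + L * K ^ β * δ ^ (α * β) := by gcongr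
    _ = (C + L * K ^ β) * δ ^ (α * β) := (add_mul _ _ _).symm

theorem stmt15_general {M : Type*} [PseudoMetricSpace M] {T : M → M} {A U : Set M} {K : ℝ≥0}
    {S : Set (ℤ → M)} {α β : ℝ} (hAU : A ⊆ U) (hT : LipschitzOnWith K T U)
    (hα0 : 0 < α) (hα1 : α ≤ 1) (hβ0 : 0 < β) (hβ1 : β ≤ 1)
    (happrox : HolderTraced T α U {y | ∀ n, y n ∈ A}) (hshad : HolderTraced T β A S) :
    HolderTraced T (α * β) U S := by
  obtain ⟨d₁, hd₁, C, hC, happrox⟩ := happrox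
  obtain ⟨d₂, hd₂, L, hL, hshad⟩ := hshad
  obtain ⟨r, hr, hrd₂⟩ := exists_pos_forall_mul_rpow_le (K * C + 1 + C) hα0 hd₂
  refine ⟨min r (min d₁ 1), by positivity, C + L * (K * C + 1 + C) ^ β, by positivity,
    fun δ hδ0 hδ x hxU hx => ?_⟩
  obtain ⟨hδr, hδd₁, hδ1⟩ : δ ≤ r ∧ δ ≤ d₁ ∧ δ ≤ 1 := by simpa only [le_min_iff] using hδ
  obtain ⟨y, hyA, hxy⟩ := happrox δ hδ0 hδd₁ x hxU hx
  have hy : IsPseudoOrbit T ((K * C + 1 + C) * δ ^ α) y :=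
    hx.of_dist_le_mul_rpow hT hxU (fun n => hAU (hyA n)) hδ0 hδ1 hα1 hxy
  obtain ⟨z, hzS, hyz⟩ := hshad _ (by positivity) (hrd₂ δ hδ0 hδr) y hyA hy
  refine ⟨z, hzS, fun n => ?_⟩
  calc dist (x n) (z n) ≤ dist (x n) (y n) + dist (y n) (z n) := dist_triangle _ _ _
    _ ≤ C * δ ^ α + L * ((K * C + 1 + C) * δ ^ α) ^ β := add_le_add (hxy n) (hyz n)
    _ ≤ (C + L * (K * C + 1 + C) ^ β) * δ ^ (α * β) :=
        add_mul_rpow_rpow_le hC.le (by positivity) hα0.le hβ0.le hβ1 hδ0 hδ1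

/-- If `T` has the Lipschitz shadowing property on `A` and every `δ`-pseudo-orbit in
`U` lies within `C δ^α` of some sequence in `A`, then `T` has the `α`-Hölder shadowing
property on `U`, with shadowing orbits contained in `A`. -/
theorem stmt15 {M : Type*} [MetricSpace M] (T : M → M) (A U : Set M)
    (hAU : A ⊆ U) (hTU : Set.MapsTo T U U)
    (L₁ : ℝ) (hLip : ∀ x ∈ U, ∀ y ∈ U, dist (T x) (T y) ≤ L₁ * dist x y)
    (d₀' L : ℝ) (hd₀' : 0 < d₀') (hL : 0 < L)
    (hshadA : ∀ δ : ℝ, 0 ≤ δ → δ ≤ d₀' → ∀ y : ℤ → M, (∀ n : ℤ, y n ∈ A) →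
      (∀ n : ℤ, dist (T (y n)) (y (n + 1)) ≤ δ) →
      ∃ z : ℤ → M, (∀ n : ℤ, z n ∈ A) ∧ (∀ n : ℤ, T (z n) = z (n + 1)) ∧
        ∀ n : ℤ, dist (z n) (y n) ≤ L * δ)
    (C α : ℝ) (hC : 0 < C) (hα0 : 0 < α) (hα1 : α < 1)
    (happrox : ∀ δ : ℝ, 0 ≤ δ → δ < 1 → ∀ x : ℤ → M, (∀ n : ℤ, x n ∈ U) →
      (∀ n : ℤ, dist (T (x n)) (x (n + 1)) ≤ δ) →
      ∃ xt : ℤ → M, (∀ n : ℤ, xt n ∈ A) ∧ ∀ n : ℤ, dist (x n) (xt n) ≤ C * δ ^ α) :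
    ∃ d₀ > 0, ∃ C₃ > 0, ∀ δ : ℝ, 0 ≤ δ → δ ≤ d₀ → ∀ x : ℤ → M,
      (∀ n : ℤ, x n ∈ U) → (∀ n : ℤ, dist (T (x n)) (x (n + 1)) ≤ δ) →
      ∃ z : ℤ → M, (∀ n : ℤ, z n ∈ A) ∧ (∀ n : ℤ, T (z n) = z (n + 1)) ∧
        ∀ n : ℤ, dist (x n) (z n) ≤ C₃ * δ ^ α := by
  have hA : HolderTraced T α U {y | ∀ n, y n ∈ A} :=
    ⟨1 / 2, by norm_num, C, hC, fun δ hδ0 hδ => happrox δ hδ0 (by linarith)⟩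
  have hshad : HolderTraced T 1 A {z | (∀ n, z n ∈ A) ∧ ∀ n, T (z n) = z (n + 1)} :=
    ⟨d₀', hd₀', L, hL, by simpa only [IsPseudoOrbit, Set.mem_ofPred_eq, and_assoc, dist_comm,
      Real.rpow_one] using hshadA⟩
  simpa only [HolderTraced, IsPseudoOrbit, Set.mem_ofPred_eq, and_assoc, mul_one] using
    stmt15_general hAU (.of_dist_le' hLip) hα0 hα1.le zero_lt_one le_rfl hA hshad
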